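/- Let ψ_0, ψ ∈ 𝒮(ℝⁿ), where ψ satisfies the moment condition of order M_ψ ≥ −1. Let ε > 0 and let λ_0, λ ∈ 𝒮(ℝⁿ) with supp 𝓕λ_0 ⊆ {ξ : |ξ|_a < 2ε} and supp 𝓕λ ⊆ {ξ : ε/2 < |ξ|_a < 2ε}. Let r = (r_1,…,r_n) with r_l > 0, let M ≥ −1 be an integer, and define for j, k ∈ ℕ₀: I_{j,k} := ∫_{ℝⁿ} |ψ_j * λ_k(z)| · ∏_{l=1}^n (1+2^{ka_l}|z_l|)^{r_l} dz (where ψ_0 is used at j = 0 and λ_0 at k = 0). Set A := max{‖D^α 𝓕ψ‖_{L_∞} : |α| ≤ M_ψ+1 or α ≤ ⌈r+2⌉}, B := max{‖(1+|ξ|)^{M+1} D^γ 𝓕ψ(ξ)‖_{L_1} : γ ≤ ⌈r+2⌉}, C := max{‖D^α 𝓕ψ_0‖_{L_∞} : |α| ≤ M_ψ+1 or α ≤ ⌈r+2⌉}, D := max{‖(1+|ξ|)^{M+1} D^γ 𝓕ψ_0(ξ)‖_{L_1} : γ ≤ ⌈r+2⌉}. Then there exists a constant c (depending only on M, M_ψ,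 r, λ_0, λ, a, n) such that I_{j,k} ≤ c·(A+B+C+D)·2^{(k−j)(M_ψ+1)a_0} for k ≤ j, and I_{j,k} ≤ c·(A+B+C+D)·2^{−(k−j)((M+1)a_0 − a·r)} for j ≤ k, where a·r := a_1r_1+…+a_nr_n. -/

import Mathlib

open MeasureTheory Complex
open scoped ENNReal NNReal BigOperators

noncomputable section

/-- Points of `ℝⁿ`, written `x = (x 0, …, x (n-1))`. -/
abbrev RV (n : ℕ) := Fin n → ℝ

/-- Tempered distributions `𝒮′(ℝⁿ)`. -/
abbrev TD (n : ℕ) := SchwartzMap (RV n) ℂ →L[ℂ] ℂ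

/-- The Fourier transform `𝓕g(ξ) = ∫ e^{-i x·ξ} g(x) dx`. -/
def FT (n : ℕ) (g : RV n → ℂ) (ξ : RV n) : ℂ :=
  ∫ x : RV n, Complex.exp (-Complex.I * ((∑ i, x i * ξ i : ℝ) : ℂ)) * g x

/-- The partial derivative `∂_i`. -/
def pderiv1 (n : ℕ) (i : Fin n) (g : RV n → ℂ) : RV n → ℂ :=
  fun x => fderiv ℝ g x (Pi.single i 1)

def pderivIter (n : ℕ) (i : Fin n) : ℕ → (RV n → ℂ) → RV n → ℂ
  | 0, g => g
  | k + 1, g => pderiv1 n i (pderivIter n i k g)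

/-- `D^α = (-i ∂_1)^{α_1} ⋯ (-i ∂_n)^{α_n}`. -/
def Dop (n : ℕ) (α : Fin n → ℕ) (g : RV n → ℂ) : RV n → ℂ :=
  fun x => (-Complex.I) ^ (∑ i, α i) *
    ((List.finRange n).foldr (fun i h => pderivIter n i (α i) h) g) x

/-- `anorm` is the anisotropic distance function `|·|_a` :
`anorm 0 = 0`, and for `x ≠ 0`, `anorm x` is the (unique) `t > 0` with
`x 1 ^ 2 / t ^ (2 a 1) + … + x n ^ 2 / t ^ (2 a n) = 1`. -/
def IsAnorm (n : ℕ) (a : Fin n → ℝ) (anorm : RV n → ℝ) : Prop :=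
  anorm 0 = 0 ∧
    ∀ x : RV n, x ≠ 0 → 0 < anorm x ∧ ∑ i, (x i : ℝ) ^ 2 / (anorm x) ^ (2 * a i) = 1

/-- Moment condition of order `M` : `D^α (𝓕ψ)(0) = 0` for all `|α| ≤ M` (void for `M = -1`). -/
def MomentCond (n : ℕ) (M : ℤ) (ψ : RV n → ℂ) : Prop :=
  ∀ α : Fin n → ℕ, (∑ i, (α i : ℤ)) ≤ M → Dop n α (FT n ψ) 0 = 0

/-- Tauberian conditions for `ε > 0` for the pair `(ψ0, ψ)`. -/
def Tauber (n : ℕ) (anorm : RV n → ℝ) (ψ0 ψ : RV n → ℂ) (ε : ℝ) : Prop :=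
  (∀ ξ, anorm ξ < 2 * ε → 0 < ‖FT n ψ0 ξ‖) ∧
    (∀ ξ, ε / 2 < anorm ξ → anorm ξ < 2 * ε → 0 < ‖FT n ψ ξ‖)

/-- The family `φ_j`, `φ_0` at `j = 0` and `φ_j(x) = 2^{j|a|} φ(2^{ja}x)` for `j ≥ 1`. -/
def fam (n : ℕ) (a : Fin n → ℝ) (φ0 φ : RV n → ℂ) : ℕ → RV n → ℂ
  | 0 => φ0
  | j + 1 => fun x =>
      (((2 : ℝ) ^ (((j : ℝ) + 1) * ∑ i, a i) : ℝ) : ℂ) *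
        φ (fun i => (2 : ℝ) ^ (((j : ℝ) + 1) * a i) * x i)

/-- Peetre–Fefferman–Stein maximal function attached to the function `F` (intended: `F = ψ_j * f`). -/
def pfs (n : ℕ) (a r : Fin n → ℝ) (F : RV n → ℂ) (j : ℕ) (x : RV n) : ℝ≥0∞ :=
  ⨆ y : RV n,
    ENNReal.ofReal (‖F y‖ / ∏ l, (1 + (2 : ℝ) ^ ((j : ℝ) * a l) * |x l - y l|) ^ (r l))

/-- Iterated-integral construction of the mixed Lebesgue norm : integrate out the
coordinates one at a time, first `x 0`, last `x (n-1)`. -/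
def mixAux (n : ℕ) (p : Fin n → ℝ≥0∞) : ℕ → ((RV n) → ℝ≥0∞) → (RV n) → ℝ≥0∞
  | 0, F => F
  | l + 1, F => fun x =>
      if h : l < n then
        (if p ⟨l, h⟩ = ∞ then
          essSup (fun t : ℝ => mixAux n p l F (Function.update x ⟨l, h⟩ t)) volume
        else
          (∫⁻ t : ℝ, (mixAux n p l F (Function.update x ⟨l, h⟩ t)) ^ (p ⟨l, h⟩).toReal) ^
            (1 / (p ⟨l, h⟩).toReal))
      else mixAux n p l F x

/-- The mixed Lebesgue quasi-norm `‖F | L_{p̄}‖` of an extended-nonnegative-valued `F`. -/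
def mixedNorm (n : ℕ) (p : Fin n → ℝ≥0∞) (F : RV n → ℝ≥0∞) : ℝ≥0∞ :=
  mixAux n p n F fun _ => 0

/-- `‖(u_k) | L_{p̄}(ℓ_q)‖`. -/
def seqNorm (n : ℕ) (p : Fin n → ℝ≥0∞) (q : ℝ≥0∞) (u : ℕ → RV n → ℝ≥0∞) : ℝ≥0∞ :=
  mixedNorm n p fun x =>
    if q = ∞ then ⨆ k, u k x else (∑' k, u k x ^ q.toReal) ^ (1 / q.toReal)

/-- Convolution of (Schwartz) functions. -/
def conv2 (n : ℕ) (f g : RV n → ℂ) (x : RV n) : ℂ := ∫ y : RV n, f y * g (x - y)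

/-- Schwartz seminorm `p_{α,β}(φ) = sup_x |x^α D^β φ(x)|`, valued in `[0,∞]`. -/
def pSemiE (n : ℕ) (α β : Fin n → ℕ) (g : RV n → ℂ) : ℝ≥0∞ :=
  ⨆ x : RV n, (‖((∏ i, x i ^ α i : ℝ) : ℂ) * Dop n β g x‖₊ : ℝ≥0∞)

/-- Schwartz seminorm `q_{N,γ}(φ) = ∫ (1+|x|²)^{N/2} |D^γ φ(x)| dx`, valued in `[0,∞]`. -/
def qSemiE (n : ℕ) (N : ℝ) (γ : Fin n → ℕ) (g : RV n → ℂ) : ℝ≥0∞ :=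
  ∫⁻ x : RV n, ENNReal.ofReal ((1 + ∑ i, (x i) ^ 2) ^ (N / 2)) * (‖Dop n γ g x‖₊ : ℝ≥0∞)

/-- Iterated Laplacian `Δ^N`. -/
def lapIter (n : ℕ) : ℕ → (RV n → ℂ) → RV n → ℂ
  | 0, g => g
  | N + 1, g => fun x => ∑ i, pderiv1 n i (pderiv1 n i (lapIter n N g)) x

/-- The box `B_{R,j} = {ξ : |ξ_k| ≤ R 2^{j a_k}}`. -/
def specBox (n : ℕ) (a : Fin n → ℝ) (R : ℝ) (j : ℕ) : Set (RV n) :=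
  {ξ | ∀ k, |ξ k| ≤ R * (2 : ℝ) ^ ((j : ℝ) * a k)}

/-- The spectral condition `supp 𝓕u ⊆ B_{R,j}` for a temperate-growth function `u`. -/
def SpecCond (n : ℕ) (a : Fin n → ℝ) (R : ℝ) (j : ℕ) (u : RV n → ℂ) : Prop :=
  ∀ φ : SchwartzMap (RV n) ℂ,
    tsupport (⇑φ) ∩ specBox n a R j = ∅ → (∫ x : RV n, u x * FT n (⇑φ) x) = 0

/-- The maximal function `u^*` of Section 3. -/
def ustar (n : ℕ) (a r : Fin n → ℝ) (R : ℝ) (j : ℕ) (u : RV n → ℂ) (x : RV n) : ℝ≥0∞ :=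
  ⨆ y : RV n,
    ENNReal.ofReal (‖u y‖ / ∏ l, (1 + R * (2 : ℝ) ^ ((j : ℝ) * a l) * |x l - y l|) ^ (r l))

/-! The weight in `I_{j,k}` is traded for derivatives on the frequency side: after rescaling to
unit scale, a weighted `L¹` norm of a convolution is at most a sum of `L¹` norms of products of
derivatives of the two Fourier transforms. For `k ≤ j` rescale to the scale of `λ_k`; by the
moment condition and Taylor's formula `𝓕ψ` vanishes to order `M_ψ + 1` at the origin, so its
contraction by `2^{-(j-k)a}` is of size `2^{-(j-k)(M_ψ+1)a_0}`. For `j ≤ k` rescale to the scale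
of `ψ_j`; then `𝓕λ_k` lives at distance at least a multiple of `2^{(k-j)a_0}` from the origin,
where the `L¹` weight `(1 + |ξ|)^{M+1}` on `𝓕ψ` gains `2^{-(k-j)(M+1)a_0}`, while passing from the
weight at scale `j` to the one at scale `k` costs `2^{(k-j)a·r}`. -/

open LineDeriv
open scoped FourierTransform SchwartzMap

section MultiIndexDerivative

lemma lineDerivOp_comm {E F : Type*} [NormedAddCommGroup E] [NormedSpace ℝ E]
    [NormedAddCommGroup F] [NormedSpace ℝ F] (v w : E) (f : 𝓢(E, F)) :
    ∂_{v} (∂_{w} f) = ∂_{w} (∂_{v} f) := by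
  have eq_snd_fderiv (v w : E) (x : E) : (∂_{v} (∂_{w} f)) x = fderiv ℝ (fderiv ℝ f) x v w := by
    have hf : DifferentiableAt ℝ (fderiv ℝ f) x :=
      ((f.smooth 2).fderiv_right (m := 1) (by norm_num)).differentiable (by norm_num) x
    have hw : ⇑(∂_{w} f : 𝓢(E, F)) = fun y => fderiv ℝ f y w :=
      funext fun y => SchwartzMap.lineDerivOp_apply_eq_fderiv _ _ _
    rw [SchwartzMap.lineDerivOp_apply_eq_fderiv, hw,
      fderiv_clm_apply hf (differentiableAt_const _)]
    simp
  ext x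
  have hsymm : IsSymmSndFDerivAt ℝ f x := (f.smooth 2).contDiffAt.isSymmSndFDerivAt (by simp)
  rw [eq_snd_fderiv, eq_snd_fderiv, hsymm v w]

variable {ι : Type*} [Fintype ι] [DecidableEq ι]

lemma exists_eq_add_single_of_sum_eq_succ {α : ι → ℕ} {d : ℕ} (hα : ∑ i, α i = d + 1) :
    ∃ (β : ι → ℕ) (i : ι), ∑ j, β j = d ∧ α = β + Pi.single i 1 := by
  obtain ⟨i, hi⟩ : ∃ i, α i ≠ 0 := by
    by_contra! h0
    simp [h0] at hα
  have hle : Pi.single i 1 ≤ α := by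
    intro j
    rcases eq_or_ne j i with rfl | hj
    · simpa using Nat.one_le_iff_ne_zero.2 hi
    · simp [hj]
  rw [← tsub_add_cancel_of_le hle] at hα
  exact ⟨_, i, by simpa [Finset.sum_add_distrib] using hα, (tsub_add_cancel_of_le hle).symm⟩

lemma multiIndex_induction {ι : Type*} [Finite ι] [DecidableEq ι] {p : (ι → ℕ) → Prop} (zero : p 0)
    (add_single : ∀ α i, p α → p (α + Pi.single i 1)) (α : ι → ℕ) : p α := by
  cases nonempty_fintype ι
  induction h : ∑ i, α i generalizing α with
  | zero =>
    have : α = 0 := by simpa [funext_iff] using h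
    exact this ▸ zero
  | succ d ih =>
    obtain ⟨β, i, hβ, rfl⟩ := exists_eq_add_single_of_sum_eq_succ h
    exact add_single β i (ih β hβ)

variable {F : Type*} [NormedAddCommGroup F] [NormedSpace ℝ F]

lemma commute_lineDerivOpCLM {E : Type*} [NormedAddCommGroup E] [NormedSpace ℝ E] (v w : E) :
    Commute (lineDerivOpCLM ℝ 𝓢(E, F) v) (lineDerivOpCLM ℝ 𝓢(E, F) w) :=
  ContinuousLinearMap.ext fun f => lineDerivOp_comm v w f

lemma pairwise_commute_lineDerivOpCLM_pow (α β : ι → ℕ) :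
    ((Finset.univ : Finset ι) : Set ι).Pairwise fun i j =>
      Commute (lineDerivOpCLM ℝ 𝓢(ι → ℝ, F) (Pi.single i 1 : ι → ℝ) ^ α i)
        (lineDerivOpCLM ℝ 𝓢(ι → ℝ, F) (Pi.single j 1 : ι → ℝ) ^ β j) :=
  fun _ _ _ _ _ => (commute_lineDerivOpCLM _ _).pow_pow _ _

/-- The iterated partial derivative `∂^α` of Schwartz functions on `ℝ^ι`. -/
def multiDeriv (α : ι → ℕ) : 𝓢(ι → ℝ, F) →L[ℝ] 𝓢(ι → ℝ, F) :=
  Finset.univ.noncommProd (fun i => lineDerivOpCLM ℝ 𝓢(ι → ℝ, F) (Pi.single i 1 : ι → ℝ) ^ α i)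
    (pairwise_commute_lineDerivOpCLM_pow α α)

@[simp]
lemma multiDeriv_zero (u : 𝓢(ι → ℝ, F)) : multiDeriv 0 u = u := by
  have h := Finset.noncommProd_eq_pow_card _ _
    (pairwise_commute_lineDerivOpCLM_pow (F := F) (0 : ι → ℕ) 0) 1 fun _ _ => pow_zero _
  rw [one_pow] at h
  exact congr($h u)

lemma multiDeriv_single (i : ι) (u : 𝓢(ι → ℝ, F)) :
    multiDeriv (Pi.single i 1) u = ∂_{(Pi.single i 1 : ι → ℝ)} u := by
  have herase := Finset.noncommProd_eq_pow_card (Finset.univ.erase i) _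
    ((pairwise_commute_lineDerivOpCLM_pow (F := F) (Pi.single i 1) (Pi.single i 1)).mono
      (by simp)) 1 fun j hj => by rw [Pi.single_eq_of_ne (Finset.ne_of_mem_erase hj), pow_zero]
  have h := Finset.mul_noncommProd_erase _ (Finset.mem_univ i) _
    (pairwise_commute_lineDerivOpCLM_pow (F := F) (Pi.single i 1) (Pi.single i 1))
  rw [herase, one_pow, mul_one, Pi.single_eq_same, pow_one] at h
  exact congr($h.symm u)

lemma multiDeriv_add (α β : ι → ℕ) (u : 𝓢(ι → ℝ, F)) :
    multiDeriv (α + β) u = multiDeriv α (multiDeriv β u) := by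
  have h := Finset.noncommProd_mul_distrib _ _ (pairwise_commute_lineDerivOpCLM_pow (F := F) α α)
    (pairwise_commute_lineDerivOpCLM_pow β β) (pairwise_commute_lineDerivOpCLM_pow β α)
  exact congr($((Finset.noncommProd_congr rfl (fun i _ => pow_add _ _ _) _).trans h) u)

lemma multiDeriv_add_single (α : ι → ℕ) (i : ι) (u : 𝓢(ι → ℝ, F)) :
    multiDeriv (α + Pi.single i 1) u = multiDeriv α (∂_{(Pi.single i 1 : ι → ℝ)} u) := by
  rw [multiDeriv_add, multiDeriv_single]

lemma lineDerivOp_multiDeriv (i : ι) (α : ι → ℕ) (u : 𝓢(ι → ℝ, F)) :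
    ∂_{(Pi.single i 1 : ι → ℝ)} (multiDeriv α u) = multiDeriv (α + Pi.single i 1) u := by
  rw [add_comm, multiDeriv_add, multiDeriv_single]

lemma tsupport_multiDeriv_subset (α : ι → ℕ) (u : 𝓢(ι → ℝ, F)) :
    tsupport (multiDeriv α u) ⊆ tsupport u := by
  induction α using multiIndex_induction with
  | zero => rw [multiDeriv_zero]
  | add_single α i ih =>
    rw [← lineDerivOp_multiDeriv]
    exact (SchwartzMap.tsupport_lineDerivOp_subset _ _).trans ih

end MultiIndexDerivative

section Leibniz

variable {ι : Type*} [Fintype ι] [DecidableEq ι]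

/-- The pointwise product of two complex-valued Schwartz functions. -/
def schwartzMul {E : Type*} [NormedAddCommGroup E] [NormedSpace ℝ E] (u v : 𝓢(E, ℂ)) : 𝓢(E, ℂ) :=
  SchwartzMap.pairing (ContinuousLinearMap.mul ℂ ℂ) u v

lemma lineDerivOp_schwartzMul {E : Type*} [NormedAddCommGroup E] [NormedSpace ℝ E] (w : E)
    (u v : 𝓢(E, ℂ)) :
    ∂_{w} (schwartzMul u v) = schwartzMul (∂_{w} u) v + schwartzMul u (∂_{w} v) := by
  ext x
  have h : HasFDerivAt (schwartzMul u v) _ x :=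
    u.differentiableAt.hasFDerivAt.mul v.differentiableAt.hasFDerivAt
  simp only [SchwartzMap.lineDerivOp_apply_eq_fderiv, h.fderiv]
  simp only [add_apply, smul_apply, smul_eq_mul, schwartzMul, SchwartzMap.pairing_apply_apply,
    SchwartzMap.lineDerivOp_apply_eq_fderiv, ContinuousLinearMap.mul_apply']
  ring

lemma lintegral_enorm_multiDeriv_schwartzMul_le (α : ι → ℕ) (u v : 𝓢(ι → ℝ, ℂ)) {Q : ℝ≥0∞}
    (hQ : ∀ β ≤ α, ∀ γ ≤ α, ∫⁻ x, ‖multiDeriv β u x‖ₑ * ‖multiDeriv γ v x‖ₑ ≤ Q) :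
    ∫⁻ x, ‖multiDeriv α (schwartzMul u v) x‖ₑ ≤ 2 ^ (∑ i, α i) * Q := by
  induction α using multiIndex_induction generalizing u v with
  | zero => simpa [schwartzMul, SchwartzMap.pairing_apply_apply] using hQ 0 le_rfl 0 le_rfl
  | add_single α i ih =>
    have hle : α ≤ α + Pi.single i 1 := le_self_add
    have hleft := ih (∂_{(Pi.single i 1 : ι → ℝ)} u) v fun β hβ γ hγ => by
      simpa only [multiDeriv_add_single] using
        hQ (β + Pi.single i 1) (add_le_add_left hβ _) γ (hγ.trans hle)
    have hright := ih u (∂_{(Pi.single i 1 : ι → ℝ)} v) fun β hβ γ hγ => by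
      simpa only [multiDeriv_add_single] using
        hQ β (hβ.trans hle) (γ + Pi.single i 1) (add_le_add_left hγ _)
    rw [multiDeriv_add_single, lineDerivOp_schwartzMul, map_add]
    calc
      _ ≤ _ := lintegral_mono fun x => enorm_add_le _ _
      _ ≤ 2 ^ (∑ i, α i) * Q + 2 ^ (∑ i, α i) * Q := by
        rw [lintegral_add_left (by fun_prop)]
        exact add_le_add hleft hright
      _ = 2 ^ (∑ j, (α + Pi.single i 1 : ι → ℕ) j) * Q := by
        simp only [Pi.add_apply, Finset.sum_add_distrib, Finset.sum_pi_single', Finset.mem_univ,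
          ↓reduceIte, pow_succ]
        ring

end Leibniz

section Taylor

variable {ι : Type*} [Fintype ι] [DecidableEq ι]
variable {F : Type*} [NormedAddCommGroup F] [NormedSpace ℝ F]

lemma opNorm_le_sum_norm_apply_single (L : (ι → ℝ) →L[ℝ] F) :
    ‖L‖ ≤ ∑ i, ‖L (Pi.single i 1)‖ := by
  refine L.opNorm_le_bound (by positivity) fun v => ?_
  have hv : v = ∑ i, v i • (Pi.single i 1 : ι → ℝ) := pi_eq_sum_univ' v
  rw [Finset.sum_mul]
  conv_lhs => rw [hv, map_sum]
  refine norm_sum_le_of_le _ fun i _ => ?_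
  rw [map_smul, norm_smul, mul_comm]
  gcongr
  exact norm_le_pi_norm v i

lemma norm_le_of_norm_lineDerivOp_le {u : 𝓢(ι → ℝ, F)} (hu : u 0 = 0) {x : ι → ℝ} {C : ℝ}
    (hC : ∀ i, ∀ y : ι → ℝ, ‖y‖ ≤ ‖x‖ → ‖(∂_{(Pi.single i 1 : ι → ℝ)} u) y‖ ≤ C) :
    ‖u x‖ ≤ Fintype.card ι * ‖x‖ * C := by
  have hfderiv (y : ι → ℝ) (hy : y ∈ Metric.closedBall (0 : ι → ℝ) ‖x‖) :
      ‖fderiv ℝ u y‖ ≤ Fintype.card ι * C := by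
    refine (opNorm_le_sum_norm_apply_single _).trans
      ((Finset.sum_le_card_nsmul _ _ C fun i _ => ?_).trans_eq (by simp))
    rw [← SchwartzMap.lineDerivOp_apply_eq_fderiv]
    exact hC i y (by simpa using hy)
  have hmv := (convex_closedBall (0 : ι → ℝ) ‖x‖).norm_image_sub_le_of_norm_fderiv_le
    (fun y _ => u.differentiableAt) hfderiv (Metric.mem_closedBall_self (norm_nonneg x))
    (show x ∈ _ by simp)
  rw [hu, sub_zero, sub_zero] at hmv
  exact hmv.trans_eq (by ring)

lemma norm_multiDeriv_le_of_multiDeriv_zero_eq_zero {u : 𝓢(ι → ℝ, F)} {m : ℕ} {A : ℝ}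
    (hzero : ∀ α : ι → ℕ, ∑ i, α i < m → multiDeriv α u 0 = 0)
    (hA : ∀ α : ι → ℕ, ∑ i, α i = m → ∀ x, ‖multiDeriv α u x‖ ≤ A)
    {α : ι → ℕ} {d : ℕ} (hα : ∑ i, α i + d = m) (x : ι → ℝ) :
    ‖multiDeriv α u x‖ ≤ (Fintype.card ι * ‖x‖) ^ d * A := by
  induction d generalizing α x with
  | zero => simpa using hA α (by simpa using hα) x
  | succ d ih =>
    have hderiv (i : ι) (y : ι → ℝ) (hy : ‖y‖ ≤ ‖x‖) :
        ‖(∂_{(Pi.single i 1 : ι → ℝ)} (multiDeriv α u)) y‖ ≤ (Fintype.card ι * ‖x‖) ^ d * A := by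
      have hsum : ∑ j, (α + Pi.single i 1 : ι → ℕ) j + d = m := by
        simp [Finset.sum_add_distrib, ← hα, add_assoc, add_comm 1]
      have hA0 : 0 ≤ A :=
        (norm_nonneg _).trans (hA (α + (d + 1) • Pi.single i 1)
          (by simp [Finset.sum_add_distrib, ← hα, ← Finset.mul_sum]) 0)
      rw [lineDerivOp_multiDeriv]
      refine (ih hsum y).trans ?_
      gcongr
    refine (norm_le_of_norm_lineDerivOp_le (hzero α (by omega)) hderiv).trans_eq ?_
    ring

end Taylor

section AnisotropicScaling

variable {ι : Type*}

/-- The anisotropic scaling `x ↦ 2^{ta} x` of `ℝ^ι`. -/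
def anisoScale (a : ι → ℝ) (t : ℝ) : (ι → ℝ) ≃L[ℝ] (ι → ℝ) :=
  ContinuousLinearEquiv.piCongrRight fun i =>
    ContinuousLinearEquiv.smulLeft (Units.mk0 ((2 : ℝ) ^ (t * a i)) (by positivity))

lemma anisoScale_apply (a : ι → ℝ) (t : ℝ) (x : ι → ℝ) (i : ι) :
    anisoScale a t x i = (2 : ℝ) ^ (t * a i) * x i := rfl

@[simp]
lemma anisoScale_zero (a : ι → ℝ) (x : ι → ℝ) : anisoScale a 0 x = x := by
  ext i
  simp [anisoScale_apply]

lemma anisoScale_anisoScale (a : ι → ℝ) (s t : ℝ) (x : ι → ℝ) :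
    anisoScale a s (anisoScale a t x) = anisoScale a (s + t) x := by
  ext i
  simp only [anisoScale_apply]
  rw [add_mul, Real.rpow_add two_pos, mul_assoc]

lemma anisoScale_single [DecidableEq ι] (a : ι → ℝ) (t : ℝ) (i : ι) :
    anisoScale a t (Pi.single i 1) = (2 : ℝ) ^ (t * a i) • Pi.single i (1 : ℝ) := by
  ext j
  rcases eq_or_ne j i with rfl | hj
  · simp [anisoScale_apply]
  · simp [anisoScale_apply, hj]

lemma measurableEmbedding_anisoScale [Countable ι] (a : ι → ℝ) (t : ℝ) :
    MeasurableEmbedding (anisoScale a t) :=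
  (anisoScale a t).toHomeomorph.measurableEmbedding

variable [Fintype ι]

lemma norm_anisoScale_le {a : ι → ℝ} {a₀ t : ℝ} (ha : ∀ i, a₀ ≤ a i) (ht : t ≤ 0) (x : ι → ℝ) :
    ‖anisoScale a t x‖ ≤ 2 ^ (t * a₀) * ‖x‖ := by
  refine (pi_norm_le_iff_of_nonneg (by positivity)).2 fun i => ?_
  rw [anisoScale_apply, norm_mul, Real.norm_of_nonneg (by positivity)]
  gcongr ?_ * ?_
  · exact Real.rpow_le_rpow_of_exponent_le one_le_two (mul_le_mul_of_nonpos_left (ha i) ht)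
  · exact norm_le_pi_norm x i

lemma smul_map_anisoScale_volume (a : ι → ℝ) (t : ℝ) :
    ENNReal.ofReal (2 ^ (t * ∑ i, a i)) • Measure.map (anisoScale a t) volume = volume := by
  classical
  have hdet : (Matrix.diagonal fun i => (2 : ℝ) ^ (t * a i)).det = 2 ^ (t * ∑ i, a i) := by
    rw [Matrix.det_diagonal, ← Real.rpow_sum_of_pos two_pos, Finset.mul_sum]
  have hcoe : ⇑(Matrix.toLin' (Matrix.diagonal fun i => (2 : ℝ) ^ (t * a i))) = anisoScale a t := by
    ext x i
    simp [Matrix.mulVec_diagonal, anisoScale_apply]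
  have hmap := Real.smul_map_diagonal_volume_pi (D := fun i => (2 : ℝ) ^ (t * a i))
    (by rw [hdet]; positivity)
  rwa [hdet, hcoe, abs_of_pos (by positivity)] at hmap

lemma lintegral_comp_anisoScale (a : ι → ℝ) (t : ℝ) (f : (ι → ℝ) → ℝ≥0∞) :
    ENNReal.ofReal (2 ^ (t * ∑ i, a i)) * ∫⁻ x, f (anisoScale a t x) = ∫⁻ x, f x := by
  conv_rhs => rw [← smul_map_anisoScale_volume a t]
  rw [lintegral_smul_measure, (measurableEmbedding_anisoScale a t).lintegral_map]
  rfl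

lemma integral_comp_anisoScale {G : Type*} [NormedAddCommGroup G] [NormedSpace ℝ G] (a : ι → ℝ)
    (t : ℝ) (f : (ι → ℝ) → G) :
    (2 : ℝ) ^ (t * ∑ i, a i) • ∫ x, f (anisoScale a t x) = ∫ x, f x := by
  conv_rhs => rw [← smul_map_anisoScale_volume a t]
  rw [integral_smul_measure, (measurableEmbedding_anisoScale a t).integral_map,
    ENNReal.toReal_ofReal (by positivity)]

variable {F : Type*} [NormedAddCommGroup F] [NormedSpace ℝ F]

/-- The composition `u(2^{ta} ·)` of a Schwartz function with an anisotropic scaling. -/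
def anisoComp (a : ι → ℝ) (t : ℝ) : 𝓢(ι → ℝ, F) →L[ℝ] 𝓢(ι → ℝ, F) :=
  SchwartzMap.compCLMOfContinuousLinearEquiv ℝ (anisoScale a t)

@[simp]
lemma anisoComp_apply (a : ι → ℝ) (t : ℝ) (u : 𝓢(ι → ℝ, F)) (x : ι → ℝ) :
    anisoComp a t u x = u (anisoScale a t x) := rfl

lemma anisoComp_zero (a : ι → ℝ) (u : 𝓢(ι → ℝ, F)) : anisoComp a 0 u = u := by
  ext x
  simp

lemma multiDeriv_anisoComp [DecidableEq ι] (a : ι → ℝ) (t : ℝ) (α : ι → ℕ) (u : 𝓢(ι → ℝ, F)) :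
    multiDeriv α (anisoComp a t u) =
      (2 : ℝ) ^ (t * ∑ i, α i * a i) • anisoComp a t (multiDeriv α u) := by
  induction α using multiIndex_induction generalizing u with
  | zero => simp
  | add_single α i ih =>
    have chain_rule : ∂_{(Pi.single i 1 : ι → ℝ)} (anisoComp a t u) =
        (2 : ℝ) ^ (t * a i) • anisoComp a t (∂_{(Pi.single i 1 : ι → ℝ)} u) := by
      rw [anisoComp, SchwartzMap.lineDerivOp_compCLMOfContinuousLinearEquiv, anisoScale_single,
        lineDerivOp_left_smul, map_smul]
    rw [multiDeriv_add_single, chain_rule, map_smul, ih, smul_smul, ← Real.rpow_add two_pos,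
      multiDeriv_add_single]
    congr 2
    simp [add_mul, Finset.sum_add_distrib, Pi.single_apply, mul_add, add_comm]

lemma norm_multiDeriv_anisoComp_le [DecidableEq ι] {a : ι → ℝ} {a₀ t : ℝ} (ha : ∀ i, a₀ ≤ a i)
    (ht : t ≤ 0) (α : ι → ℕ) (u : 𝓢(ι → ℝ, F)) (x : ι → ℝ) :
    ‖multiDeriv α (anisoComp a t u) x‖ ≤
      (2 ^ (t * a₀)) ^ (∑ i, α i) * ‖multiDeriv α u (anisoScale a t x)‖ := by
  rw [multiDeriv_anisoComp, smul_apply, anisoComp_apply, norm_smul,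
    Real.norm_of_nonneg (by positivity), ← Real.rpow_mul_natCast two_pos.le]
  gcongr ?_ * _
  refine Real.rpow_le_rpow_of_exponent_le one_le_two ?_
  rw [mul_assoc, Nat.cast_sum, Finset.mul_sum _ _ a₀]
  refine mul_le_mul_of_nonpos_left (Finset.sum_le_sum fun i _ => ?_) ht
  rw [mul_comm]
  gcongr
  exact ha i

/-- The `L¹`-normalised dilation `2^{t|a|} u(2^{ta} ·)`. -/
def anisoDilate (a : ι → ℝ) (t : ℝ) : 𝓢(ι → ℝ, F) →L[ℝ] 𝓢(ι → ℝ, F) :=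
  (2 : ℝ) ^ (t * ∑ i, a i) • anisoComp a t

lemma anisoDilate_apply (a : ι → ℝ) (t : ℝ) (u : 𝓢(ι → ℝ, F)) (x : ι → ℝ) :
    anisoDilate a t u x = (2 : ℝ) ^ (t * ∑ i, a i) • u (anisoScale a t x) := rfl

end AnisotropicScaling

section Fourier

variable {n : ℕ}

/-- A Schwartz function on `RV n`, which carries the supremum norm, as a Schwartz function on
Euclidean space, where Mathlib's Fourier transform lives. -/
def euclideanPullback (f : 𝓢(RV n, ℂ)) : 𝓢(EuclideanSpace ℝ (Fin n), ℂ) :=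
  SchwartzMap.compCLMOfContinuousLinearEquiv ℂ (EuclideanSpace.equiv (Fin n) ℝ) f

lemma euclideanPullback_apply (f : 𝓢(RV n, ℂ)) (x : EuclideanSpace ℝ (Fin n)) :
    euclideanPullback f x = f (EuclideanSpace.equiv (Fin n) ℝ x) := rfl

lemma integral_comp_euclideanEquiv {G : Type*} [NormedAddCommGroup G] [NormedSpace ℝ G]
    (g : RV n → G) : ∫ x, g (EuclideanSpace.equiv (Fin n) ℝ x) = ∫ x, g x :=
  (EuclideanSpace.volume_preserving_symm_measurableEquiv_toLp (Fin n)).integral_comp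
    (EuclideanSpace.equiv (Fin n) ℝ).toHomeomorph.measurableEmbedding g

/-- The frequency change `ξ ↦ ξ / 2π` from the normalisation `e^{-i x·ξ}` of `FT` to Mathlib's
`e^{-2πi x·ξ}`. -/
def frequencyEquiv (n : ℕ) : RV n ≃L[ℝ] EuclideanSpace ℝ (Fin n) :=
  (EuclideanSpace.equiv (Fin n) ℝ).symm.trans
    (ContinuousLinearEquiv.smulLeft (Units.mk0 ((2 * Real.pi)⁻¹ : ℝ) (by positivity)))

lemma inner_frequencyEquiv (x : EuclideanSpace ℝ (Fin n)) (ξ : RV n) :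
    inner ℝ x (frequencyEquiv n ξ) = (2 * Real.pi)⁻¹ * ∑ i, x i * ξ i := by
  have : frequencyEquiv n ξ = (2 * Real.pi)⁻¹ • (EuclideanSpace.equiv (Fin n) ℝ).symm ξ := rfl
  rw [this, inner_smul_right, PiLp.inner_apply]
  simp [mul_comm]

/-- The Fourier transform `FT` as an operator on Schwartz functions. -/
def schwartzFT (f : 𝓢(RV n, ℂ)) : 𝓢(RV n, ℂ) :=
  SchwartzMap.compCLMOfContinuousLinearEquiv ℂ (frequencyEquiv n) (𝓕 (euclideanPullback f))

lemma schwartzFT_apply_eq_fourier (f : 𝓢(RV n, ℂ)) (ξ : RV n) :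
    schwartzFT f ξ = 𝓕 (euclideanPullback f) (frequencyEquiv n ξ) := rfl

lemma coe_schwartzFT (f : 𝓢(RV n, ℂ)) : ⇑(schwartzFT f) = FT n f := by
  ext ξ
  rw [schwartzFT_apply_eq_fourier, SchwartzMap.fourier_coe, Real.fourier_eq', FT,
    ← integral_comp_euclideanEquiv]
  congr 1 with x
  rw [euclideanPullback_apply, smul_eq_mul, inner_frequencyEquiv]
  congr 2
  have : (Real.pi : ℂ) ≠ 0 := mod_cast Real.pi_ne_zero
  simp only [neg_mul, mul_inv_rev, ofReal_neg, ofReal_mul, ofReal_ofNat, ofReal_inv, ofReal_sum,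
    PiLp.continuousLinearEquiv_apply, neg_inj]
  field_simp

lemma hasTemperateGrowth_apply (i : Fin n) : (fun x : RV n => x i).HasTemperateGrowth :=
  (ContinuousLinearMap.proj (R := ℝ) (φ := fun _ : Fin n => ℝ) i).hasTemperateGrowth

lemma lineDerivOp_schwartzFT (i : Fin n) (f : 𝓢(RV n, ℂ)) :
    ∂_{(Pi.single i 1 : RV n)} (schwartzFT f) =
      schwartzFT (-I • SchwartzMap.smulLeftCLM ℂ (fun x : RV n => x i) f) := by
  rw [schwartzFT, SchwartzMap.lineDerivOp_compCLMOfContinuousLinearEquiv,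
    SchwartzMap.lineDerivOp_fourier_eq, schwartzFT]
  congr 2
  ext x
  have hinner : (inner ℝ · (frequencyEquiv n (Pi.single i 1)) :
      EuclideanSpace ℝ (Fin n) → ℝ).HasTemperateGrowth := by fun_prop
  have : (Real.pi : ℂ) ≠ 0 := mod_cast Real.pi_ne_zero
  have hcoord : inner ℝ x (frequencyEquiv n (Pi.single i 1)) = (2 * Real.pi)⁻¹ * x i := by
    simp [inner_frequencyEquiv, Pi.single_apply]
  simp only [smul_apply, euclideanPullback_apply,
    SchwartzMap.smulLeftCLM_apply_apply hinner,
    SchwartzMap.smulLeftCLM_apply_apply (hasTemperateGrowth_apply i), hcoord]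
  simp only [mul_inv_rev, real_smul, ofReal_mul, ofReal_inv, ofReal_ofNat, smul_eq_mul, neg_mul,
    PiLp.continuousLinearEquiv_apply, neg_inj]
  field_simp

lemma exists_multiDeriv_schwartzFT_eq (α : Fin n → ℕ) (f : 𝓢(RV n, ℂ)) :
    ∃ g : 𝓢(RV n, ℂ), (∀ x, ‖g x‖ = (∏ i, |x i| ^ α i) * ‖f x‖) ∧
      multiDeriv α (schwartzFT f) = schwartzFT g := by
  induction α using multiIndex_induction generalizing f with
  | zero => exact ⟨f, by simp⟩
  | add_single α i ih =>
    obtain ⟨g, hg, hFg⟩ := ih (-I • SchwartzMap.smulLeftCLM ℂ (fun x : RV n => x i) f)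
    refine ⟨g, fun x => ?_, by rw [multiDeriv_add_single, lineDerivOp_schwartzFT, hFg]⟩
    have hprod : ∏ j, |x j| ^ (α + Pi.single i 1 : Fin n → ℕ) j = (∏ j, |x j| ^ α j) * |x i| := by
      simp only [Pi.add_apply, pow_add, Finset.prod_mul_distrib]
      simp [Pi.single_apply, pow_ite]
    rw [hg, hprod, mul_assoc]
    simp [SchwartzMap.smulLeftCLM_apply_apply (hasTemperateGrowth_apply i)]

lemma norm_le_integral_norm_schwartzFT (f : 𝓢(RV n, ℂ)) (z : RV n) :
    ‖f z‖ ≤ ((2 * Real.pi) ^ n)⁻¹ * ∫ ξ, ‖schwartzFT f ξ‖ := by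
  have hinv : f z = 𝓕⁻ (𝓕 (euclideanPullback f)) ((EuclideanSpace.equiv (Fin n) ℝ).symm z) := by
    rw [FourierTransform.fourierInv_fourier_eq, euclideanPullback_apply,
      ContinuousLinearEquiv.apply_symm_apply]
  calc ‖f z‖ ≤ ∫ w, ‖𝓕 (euclideanPullback f) w‖ := by
        rw [hinv, SchwartzMap.fourierInv_coe, Real.fourierInv_eq]
        exact (norm_integral_le_integral_norm _).trans_eq (by simp)
    _ = ∫ w : EuclideanSpace ℝ (Fin n),
          ‖schwartzFT f (EuclideanSpace.equiv (Fin n) ℝ ((2 * Real.pi) • w))‖ := by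
        congr 1 with w
        have : frequencyEquiv n (EuclideanSpace.equiv (Fin n) ℝ ((2 * Real.pi) • w)) =
          (2 * Real.pi)⁻¹ • (2 * Real.pi) • w := rfl
        rw [schwartzFT_apply_eq_fourier, this, inv_smul_smul₀ (by positivity)]
    _ = _ := by
        rw [Measure.integral_comp_smul volume
            (fun w => ‖schwartzFT f (EuclideanSpace.equiv (Fin n) ℝ w)‖),
          integral_comp_euclideanEquiv (fun ξ => ‖schwartzFT f ξ‖), finrank_euclideanSpace_fin,
          abs_of_pos (by positivity), smul_eq_mul]

lemma enorm_le_lintegral_enorm_schwartzFT (f : 𝓢(RV n, ℂ)) (z : RV n) :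
    ‖f z‖ₑ ≤ ∫⁻ ξ, ‖schwartzFT f ξ‖ₑ := by
  rw [← ofReal_norm, ← ofReal_integral_norm_eq_lintegral_enorm (schwartzFT f).integrable]
  refine ENNReal.ofReal_le_ofReal ((norm_le_integral_norm_schwartzFT f z).trans ?_)
  refine mul_le_of_le_one_left (by positivity) (inv_le_one_of_one_le₀ (one_le_pow₀ ?_))
  linarith [Real.pi_gt_three]

lemma schwartzFT_anisoDilate (a : Fin n → ℝ) (t : ℝ) (u : 𝓢(RV n, ℂ)) :
    schwartzFT (anisoDilate a t u) = anisoComp a (-t) (schwartzFT u) := by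
  ext ξ
  rw [anisoComp_apply, coe_schwartzFT, coe_schwartzFT, FT, FT]
  conv_rhs => rw [← integral_comp_anisoScale a t, ← integral_smul]
  congr 1 with x
  have hpair : ∑ i, anisoScale a t x i * anisoScale a (-t) ξ i = ∑ i, x i * ξ i := by
    refine Finset.sum_congr rfl fun i _ => ?_
    simp only [anisoScale_apply, neg_mul, Real.rpow_neg two_pos.le]
    field_simp
  rw [hpair, anisoDilate_apply, mul_smul_comm]

/-- The convolution of two Schwartz functions on `RV n`. -/
def schwartzConv (f g : 𝓢(RV n, ℂ)) : 𝓢(RV n, ℂ) :=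
  SchwartzMap.compCLMOfContinuousLinearEquiv ℂ (EuclideanSpace.equiv (Fin n) ℝ).symm
    (SchwartzMap.convolution (ContinuousLinearMap.mul ℂ ℂ)
      (euclideanPullback f) (euclideanPullback g))

lemma coe_schwartzConv (f g : 𝓢(RV n, ℂ)) : ⇑(schwartzConv f g) = conv2 n f g := by
  ext z
  have : schwartzConv f g z = SchwartzMap.convolution (ContinuousLinearMap.mul ℂ ℂ)
    (euclideanPullback f) (euclideanPullback g) ((EuclideanSpace.equiv (Fin n) ℝ).symm z) := rfl
  rw [this, SchwartzMap.convolution_apply, MeasureTheory.convolution, conv2,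
    ← integral_comp_euclideanEquiv]
  rfl

lemma schwartzFT_schwartzConv (f g : 𝓢(RV n, ℂ)) :
    schwartzFT (schwartzConv f g) = schwartzMul (schwartzFT f) (schwartzFT g) := by
  have hconv : euclideanPullback (schwartzConv f g) =
      SchwartzMap.convolution (ContinuousLinearMap.mul ℂ ℂ)
        (euclideanPullback f) (euclideanPullback g) := by
    ext x
    simp [euclideanPullback, schwartzConv]
  rw [schwartzFT, hconv, SchwartzMap.fourier_convolution]
  ext ξ
  simp [schwartzFT, schwartzMul, SchwartzMap.pairing_apply_apply]

end Fourier

section WeightedL1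

variable {n : ℕ}

/-- The weighted norm `∫ |h(z)| ∏_l (1 + 2^{t a_l} |z_l|)^{r_l} dz`; the integral `I_{j,k}` is the
case `h = ψ_j * λ_k`, `t = k`. -/
def weightedL1 (a r : Fin n → ℝ) (t : ℝ) (h : RV n → ℂ) : ℝ≥0∞ :=
  ∫⁻ z, (‖h z‖₊ : ℝ≥0∞) * ∏ l, ENNReal.ofReal ((1 + (2 : ℝ) ^ (t * a l) * |z l|) ^ r l)

lemma weightedL1_le_ofReal_mul {a r : Fin n → ℝ} (ha : ∀ l, 0 ≤ a l) (hr : ∀ l, 0 ≤ r l) {s t : ℝ}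
    (hst : s ≤ t) (h : RV n → ℂ) :
    weightedL1 a r t h ≤
      ENNReal.ofReal (2 ^ ((t - s) * ∑ l, a l * r l)) * weightedL1 a r s h := by
  have weight_le (z : RV n) (l : Fin n) : ENNReal.ofReal ((1 + (2 : ℝ) ^ (t * a l) * |z l|) ^ r l) ≤
      ENNReal.ofReal (2 ^ ((t - s) * (a l * r l))) *
        ENNReal.ofReal ((1 + (2 : ℝ) ^ (s * a l) * |z l|) ^ r l) := by
    have hone : (1 : ℝ) ≤ 2 ^ ((t - s) * a l) :=
      Real.one_le_rpow one_le_two (mul_nonneg (sub_nonneg.2 hst) (ha l))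
    rw [← ENNReal.ofReal_mul (by positivity), ← mul_assoc, Real.rpow_mul two_pos.le _ (r l),
      ← Real.mul_rpow (by positivity) (by positivity), mul_add, mul_one, ← mul_assoc,
      ← Real.rpow_add two_pos, ← add_mul, sub_add_cancel]
    gcongr
    exact hr l
  rw [weightedL1, weightedL1, ← lintegral_const_mul' _ _ ENNReal.ofReal_ne_top]
  refine lintegral_mono fun z => ?_
  rw [mul_left_comm, Finset.mul_sum, Real.rpow_sum_of_pos two_pos,
    ENNReal.ofReal_prod_of_nonneg fun _ _ => by positivity, ← Finset.prod_mul_distrib]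
  gcongr with l
  exact weight_le z l

lemma weightedL1_eq_weightedL1_anisoDilate (a r : Fin n → ℝ) (t : ℝ) (h : 𝓢(RV n, ℂ)) :
    weightedL1 a r t h = weightedL1 a r 0 (anisoDilate a (-t) h) := by
  rw [weightedL1, weightedL1]
  conv_rhs => rw [← lintegral_comp_anisoScale a t, ← lintegral_const_mul' _ _ ENNReal.ofReal_ne_top]
  refine lintegral_congr fun z => ?_
  have habs (l : Fin n) : |anisoScale a t z l| = 2 ^ (t * a l) * |z l| := by
    rw [anisoScale_apply, abs_mul, abs_of_pos (by positivity)]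
  have hcancel : ENNReal.ofReal (2 ^ (t * ∑ i, a i)) * ‖(2 : ℝ) ^ (-t * ∑ i, a i)‖ₑ = 1 := by
    rw [Real.enorm_of_nonneg (by positivity), ← ENNReal.ofReal_mul (by positivity),
      ← Real.rpow_add two_pos]
    simp
  simp only [habs, ← enorm_eq_nnnorm, anisoDilate_apply, anisoScale_anisoScale, enorm_smul,
    neg_add_cancel, anisoScale_zero, zero_mul, Real.rpow_zero, one_mul]
  rw [← mul_assoc, ← mul_assoc, hcancel, one_mul]

lemma exists_prod_one_add_abs_pow_le {ι : Type*} [Fintype ι] (N : ι → ℕ) (z : ι → ℝ) :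
    ∃ α ≤ N, ∏ l, (1 + |z l|) ^ N l ≤ 2 ^ (∑ l, N l) * ∏ l, |z l| ^ α l := by
  refine ⟨fun l => if 1 ≤ |z l| then N l else 0, fun l => by dsimp only; split_ifs <;> simp, ?_⟩
  rw [← Finset.prod_pow_eq_pow_sum, ← Finset.prod_mul_distrib]
  refine Finset.prod_le_prod (fun l _ => by positivity) fun l _ => ?_
  dsimp only
  split_ifs with hz
  · rw [← mul_pow]
    gcongr
    linarith
  · rw [pow_zero, mul_one]
    gcongr
    linarith

lemma enorm_mul_prod_one_add_abs_pow_le (N : Fin n → ℕ) (h : 𝓢(RV n, ℂ)) {Q : ℝ≥0∞}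
    (hQ : ∀ α ≤ N, ∫⁻ ξ, ‖multiDeriv α (schwartzFT h) ξ‖ₑ ≤ Q) (z : RV n) :
    ‖h z‖ₑ * ENNReal.ofReal (∏ l, (1 + |z l|) ^ N l) ≤ 2 ^ (∑ l, N l) * Q := by
  obtain ⟨α, hα, hle⟩ := exists_prod_one_add_abs_pow_le N z
  obtain ⟨g, hg, hFg⟩ := exists_multiDeriv_schwartzFT_eq α h
  calc ‖h z‖ₑ * ENNReal.ofReal (∏ l, (1 + |z l|) ^ N l)
      ≤ ‖h z‖ₑ * ENNReal.ofReal (2 ^ (∑ l, N l) * ∏ l, |z l| ^ α l) := by gcongr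
    _ = 2 ^ (∑ l, N l) * ‖g z‖ₑ := by
      rw [← ofReal_norm (g z), hg, ENNReal.ofReal_mul (by positivity),
        ENNReal.ofReal_mul (by positivity), ofReal_norm, ENNReal.ofReal_pow two_pos.le,
        ENNReal.ofReal_ofNat]
      ring
    _ ≤ 2 ^ (∑ l, N l) * Q := by
      gcongr
      exact (enorm_le_lintegral_enorm_schwartzFT g z).trans (hFg ▸ hQ α hα)

lemma exists_weightedL1_zero_le (a : Fin n → ℝ) {r : Fin n → ℝ} {N : Fin n → ℕ}
    (hN : ∀ l, r l + 1 < N l) :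
    ∃ K : ℝ≥0, ∀ (h : 𝓢(RV n, ℂ)) (Q : ℝ≥0∞),
      (∀ α ≤ N, ∫⁻ ξ, ‖multiDeriv α (schwartzFT h) ξ‖ₑ ≤ Q) → weightedL1 a r 0 h ≤ K * Q := by
  have hint : Integrable fun z : RV n => ∏ l, (1 + |z l|) ^ (-(N l - r l)) :=
    Integrable.fintype_prod (f := fun l (y : ℝ) => (1 + |y|) ^ (-(N l - r l))) fun l =>
      integrable_one_add_norm (E := ℝ) (by simpa using by linarith [hN l])
  have hsplit (z : RV n) : ∏ l, (1 + |z l|) ^ r l =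
      (∏ l, (1 + |z l|) ^ N l) * ∏ l, (1 + |z l|) ^ (-(N l - r l)) := by
    rw [← Finset.prod_mul_distrib]
    refine Finset.prod_congr rfl fun l _ => ?_
    rw [← Real.rpow_natCast, ← Real.rpow_add (by positivity)]
    congr 1
    ring
  refine ⟨2 ^ (∑ l, N l) *
    (∫⁻ z : RV n, ENNReal.ofReal (∏ l, (1 + |z l|) ^ (-(N l - r l)))).toNNReal, fun h Q hQ => ?_⟩
  rw [ENNReal.coe_mul, ENNReal.coe_toNNReal hint.lintegral_lt_top.ne, mul_right_comm,
    ENNReal.coe_pow, ENNReal.coe_ofNat, ← lintegral_const_mul _ (by fun_prop)]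
  refine lintegral_mono fun z => ?_
  simp only [zero_mul, Real.rpow_zero, one_mul]
  rw [← ENNReal.ofReal_prod_of_nonneg fun _ _ => by positivity, hsplit,
    ENNReal.ofReal_mul (by positivity), ← mul_assoc]
  gcongr ?_ * _
  exact enorm_mul_prod_one_add_abs_pow_le N h hQ z

lemma schwartzFT_anisoDilate_schwartzConv (a : Fin n → ℝ) (s j k : ℝ) (Ψ Λ : 𝓢(RV n, ℂ)) :
    schwartzFT (anisoDilate a (-s) (schwartzConv (anisoDilate a j Ψ) (anisoDilate a k Λ))) =
      schwartzMul (anisoComp a (s - j) (schwartzFT Ψ)) (anisoComp a (s - k) (schwartzFT Λ)) := by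
  rw [schwartzFT_anisoDilate, schwartzFT_schwartzConv, schwartzFT_anisoDilate,
    schwartzFT_anisoDilate]
  ext ξ
  simp [schwartzMul, SchwartzMap.pairing_apply_apply, anisoScale_anisoScale, neg_add_eq_sub]

lemma exists_weightedL1_schwartzConv_le (a : Fin n → ℝ) {r : Fin n → ℝ} {N : Fin n → ℕ}
    (hN : ∀ l, r l + 1 < N l) :
    ∃ K : ℝ≥0, ∀ (s j k : ℝ) (Ψ Λ : 𝓢(RV n, ℂ)) (Q : ℝ≥0∞),
      (∀ α ≤ N, ∀ β ≤ N, ∫⁻ ξ, ‖multiDeriv α (anisoComp a (s - j) (schwartzFT Ψ)) ξ‖ₑ *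
        ‖multiDeriv β (anisoComp a (s - k) (schwartzFT Λ)) ξ‖ₑ ≤ Q) →
      weightedL1 a r s (schwartzConv (anisoDilate a j Ψ) (anisoDilate a k Λ)) ≤ K * Q := by
  obtain ⟨K, hK⟩ := exists_weightedL1_zero_le a hN
  refine ⟨K * 2 ^ (∑ l, N l), fun s j k Ψ Λ Q hQ => ?_⟩
  rw [weightedL1_eq_weightedL1_anisoDilate, ENNReal.coe_mul, mul_assoc]
  refine hK _ _ fun α hα => ?_
  rw [schwartzFT_anisoDilate_schwartzConv]
  refine (lintegral_enorm_multiDeriv_schwartzMul_le α _ _ fun β hβ γ hγ =>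
    hQ β (hβ.trans hα) γ (hγ.trans hα)).trans ?_
  push_cast
  gcongr
  · exact one_le_two
  · exact hα _

end WeightedL1

section ProductEstimates

variable {ι : Type*} [Fintype ι] {a : ι → ℝ} {a₀ : ℝ}

lemma norm_multiDeriv_anisoComp_le_of_multiDeriv_zero_eq_zero [DecidableEq ι]
    {F : Type*} [NormedAddCommGroup F] [NormedSpace ℝ F] (ha₀ : 0 ≤ a₀) (ha : ∀ i, a₀ ≤ a i)
    {t : ℝ} (ht : t ≤ 0) {u : 𝓢(ι → ℝ, F)} {m : ℕ} {A : ℝ}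
    (hzero : ∀ α : ι → ℕ, ∑ i, α i < m → multiDeriv α u 0 = 0)
    (hA : ∀ α : ι → ℕ, ∑ i, α i = m → ∀ x, ‖multiDeriv α u x‖ ≤ A)
    {α : ι → ℕ} (hα : ∀ x, ‖multiDeriv α u x‖ ≤ A) (x : ι → ℝ) :
    ‖multiDeriv α (anisoComp a t u) x‖ ≤
      (2 ^ (t * a₀)) ^ m * (1 + Fintype.card ι * ‖x‖) ^ m * A := by
  have hscale := norm_anisoScale_le ha ht x
  have hderiv := norm_multiDeriv_anisoComp_le ha ht α u x
  have hρ : (2 : ℝ) ^ (t * a₀) ≤ 1 :=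
    Real.rpow_le_one_of_one_le_of_nonpos one_le_two (mul_nonpos_of_nonpos_of_nonneg ht ha₀)
  have hA0 : 0 ≤ A := (norm_nonneg _).trans (hα 0)
  have hbase : 1 ≤ 1 + Fintype.card ι * ‖x‖ := le_add_of_nonneg_right (by positivity)
  set ρ : ℝ := 2 ^ (t * a₀)
  have hρ0 : 0 ≤ ρ := by positivity
  rcases le_or_gt m (∑ i, α i) with hm | hm
  · calc ‖multiDeriv α (anisoComp a t u) x‖
        ≤ ρ ^ (∑ i, α i) * ‖multiDeriv α u (anisoScale a t x)‖ := hderiv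
      _ ≤ ρ ^ m * A := by
        gcongr ?_ * ?_
        · exact pow_le_pow_of_le_one hρ0 hρ hm
        · exact hα _
      _ ≤ ρ ^ m * (1 + Fintype.card ι * ‖x‖) ^ m * A := by
        gcongr
        exact le_mul_of_one_le_right (by positivity) (one_le_pow₀ hbase)
  · obtain ⟨d, hd⟩ := Nat.exists_eq_add_of_lt hm
    replace hd : ∑ i, α i + (d + 1) = m := by omega
    calc ‖multiDeriv α (anisoComp a t u) x‖
        ≤ ρ ^ (∑ i, α i) * ((Fintype.card ι * ‖anisoScale a t x‖) ^ (d + 1) * A) := by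
          refine hderiv.trans ?_
          gcongr
          exact norm_multiDeriv_le_of_multiDeriv_zero_eq_zero hzero hA hd _
      _ ≤ ρ ^ (∑ i, α i) * ((Fintype.card ι * (ρ * ‖x‖)) ^ (d + 1) * A) := by gcongr
      _ = ρ ^ m * (Fintype.card ι * ‖x‖) ^ (d + 1) * A := by rw [← hd]; ring
      _ ≤ ρ ^ m * (1 + Fintype.card ι * ‖x‖) ^ m * A := by
        gcongr ?_ * ?_ * A
        calc (Fintype.card ι * ‖x‖) ^ (d + 1)
            ≤ (1 + Fintype.card ι * ‖x‖) ^ (d + 1) := by gcongr; linarith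
          _ ≤ (1 + Fintype.card ι * ‖x‖) ^ m := pow_le_pow_right₀ hbase (by omega)

lemma enorm_multiDeriv_anisoComp_le_of_multiDeriv_zero_eq_zero [DecidableEq ι]
    {F : Type*} [NormedAddCommGroup F] [NormedSpace ℝ F] (ha₀ : 0 ≤ a₀) (ha : ∀ i, a₀ ≤ a i)
    {t : ℝ} (ht : t ≤ 0) {u : 𝓢(ι → ℝ, F)} {m : ℕ} {A : ℝ≥0∞}
    (hzero : ∀ α : ι → ℕ, ∑ i, α i < m → multiDeriv α u 0 = 0)
    (hA : ∀ α : ι → ℕ, ∑ i, α i = m → ∀ x, ‖multiDeriv α u x‖ₑ ≤ A)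
    {α : ι → ℕ} (hα : ∀ x, ‖multiDeriv α u x‖ₑ ≤ A) (x : ι → ℝ) :
    ‖multiDeriv α (anisoComp a t u) x‖ₑ ≤
      A * (ENNReal.ofReal ((2 ^ (t * a₀)) ^ m) *
        ENNReal.ofReal ((1 + Fintype.card ι * ‖x‖) ^ m)) := by
  rw [← ENNReal.ofReal_mul (by positivity)]
  rcases eq_or_ne A ∞ with rfl | hAtop
  · rw [ENNReal.top_mul (ENNReal.ofReal_pos.2 (by positivity)).ne']
    exact le_top
  lift A to ℝ≥0 using hAtop
  simp only [enorm_le_coe] at hA hα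
  rw [← ofReal_norm, ← ENNReal.ofReal_coe_nnreal, ← ENNReal.ofReal_mul A.coe_nonneg, mul_comm]
  exact ENNReal.ofReal_le_ofReal
    (norm_multiDeriv_anisoComp_le_of_multiDeriv_zero_eq_zero ha₀ ha ht hzero hA hα x)

lemma lintegral_ofReal_one_add_mul_norm_pow_mul_enorm_ne_top {E F : Type*} [NormedAddCommGroup E]
    [NormedSpace ℝ E] [MeasurableSpace E] [BorelSpace E] [SecondCountableTopology E]
    [NormedAddCommGroup F] [NormedSpace ℝ F] (μ : Measure E) [μ.HasTemperateGrowth]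
    {C : ℝ} (hC : 0 ≤ C) (m : ℕ) (g : 𝓢(E, F)) :
    ∫⁻ x, ENNReal.ofReal ((1 + C * ‖x‖) ^ m) * ‖g x‖ₑ ∂μ ≠ ∞ := by
  have hint : Integrable (fun x => (1 + C * ‖x‖) ^ m * ‖g x‖) μ := by
    simp only [add_comm (1 : ℝ), add_pow, one_pow, mul_one, mul_pow, Finset.sum_mul]
    refine integrable_finsetSum _ fun i _ => ?_
    refine ((g.integrable_pow_mul μ i).const_mul (C ^ i * m.choose i)).congr
      (.of_forall fun x => ?_)
    ring
  convert hint.lintegral_lt_top.ne using 3 with x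
  rw [ENNReal.ofReal_mul (by positivity), ofReal_norm]

lemma exists_lintegral_enorm_anisoComp_mul_enorm_le_of_multiDeriv_zero_eq_zero [DecidableEq ι]
    {F G : Type*} [NormedAddCommGroup F] [NormedSpace ℝ F] [NormedAddCommGroup G] [NormedSpace ℝ G]
    (ha₀ : 0 ≤ a₀) (ha : ∀ i, a₀ ≤ a i) (m : ℕ) (N : ι → ℕ) (v : 𝓢(ι → ℝ, G)) :
    ∃ c : ℝ≥0, ∀ (u : 𝓢(ι → ℝ, F)) (A : ℝ≥0∞),
      (∀ α : ι → ℕ, ∑ i, α i < m → multiDeriv α u 0 = 0) →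
      (∀ α : ι → ℕ, ∑ i, α i = m ∨ α ≤ N → ∀ x, ‖multiDeriv α u x‖ₑ ≤ A) →
      ∀ t ≤ 0, ∀ α ≤ N, ∀ β ≤ N,
        ∫⁻ x, ‖multiDeriv α (anisoComp a t u) x‖ₑ * ‖multiDeriv β v x‖ₑ ≤
          c * A * ENNReal.ofReal ((2 ^ (t * a₀)) ^ m) := by
  let moment (β : ι → ℕ) : ℝ≥0∞ :=
    ∫⁻ x, ENNReal.ofReal ((1 + Fintype.card ι * ‖x‖) ^ m) * ‖multiDeriv β v x‖ₑ
  have moment_ne_top (β : ι → ℕ) : moment β ≠ ∞ :=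
    lintegral_ofReal_one_add_mul_norm_pow_mul_enorm_ne_top volume (Nat.cast_nonneg _) m _
  refine ⟨∑ β ∈ Finset.Iic N, (moment β).toNNReal, fun u A hzero hA t ht α hα β hβ => ?_⟩
  calc
    _ ≤ ∫⁻ x, A * ENNReal.ofReal ((2 ^ (t * a₀)) ^ m) *
        (ENNReal.ofReal ((1 + Fintype.card ι * ‖x‖) ^ m) * ‖multiDeriv β v x‖ₑ) := by
      refine lintegral_mono fun x => ?_
      rw [← mul_assoc, mul_assoc A]
      gcongr ?_ * _
      exact enorm_multiDeriv_anisoComp_le_of_multiDeriv_zero_eq_zero ha₀ ha ht hzero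
        (fun γ hγ => hA γ (.inl hγ)) (hA α (.inr hα)) x
    _ = moment β * A * ENNReal.ofReal ((2 ^ (t * a₀)) ^ m) := by
      have hmeas : Measurable fun x : ι → ℝ =>
          ENNReal.ofReal ((1 + Fintype.card ι * ‖x‖) ^ m) * ‖multiDeriv β v x‖ₑ :=
        Measurable.mul (by fun_prop) (multiDeriv β v).continuous.enorm.measurable
      rw [lintegral_const_mul _ hmeas, mul_comm, mul_assoc]
    _ ≤ _ := by
      gcongr
      rw [← ENNReal.coe_toNNReal (moment_ne_top β)]
      exact_mod_cast Finset.single_le_sum (f := fun γ => (moment γ).toNNReal)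
        (fun _ _ => zero_le) (Finset.mem_Iic.2 hβ)

lemma exists_norm_le_mul_norm_rpow {E F : Type*} [NormedAddCommGroup E] [NormedSpace ℝ E]
    [NormedAddCommGroup F] [NormedSpace ℝ F] {w : 𝓢(E, F)} (hw : 0 ∉ tsupport w) {q : ℝ}
    (hq : 0 ≤ q) : ∃ c : ℝ≥0, ∀ x, ‖w x‖ ≤ c * ‖x‖ ^ q := by
  obtain ⟨δ, hδ, hvanish⟩ :=
    Metric.eventually_nhds_iff.1 (notMem_tsupport_iff_eventuallyEq.1 hw)
  have hsup : 0 ≤ SchwartzMap.seminorm ℝ 0 0 w := apply_nonneg _ _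
  refine ⟨.mk (SchwartzMap.seminorm ℝ 0 0 w * δ⁻¹ ^ q) (by positivity), fun x => ?_⟩
  rw [NNReal.coe_mk, mul_assoc, ← Real.mul_rpow (by positivity) (norm_nonneg _)]
  rcases lt_or_ge ‖x‖ δ with hx | hx
  · have : w x = 0 := hvanish (by simpa using hx)
    rw [this, norm_zero]
    positivity
  · refine (SchwartzMap.norm_le_seminorm ℝ w x).trans (le_mul_of_one_le_right hsup ?_)
    refine Real.one_le_rpow ?_ hq
    rwa [inv_mul_eq_div, one_le_div hδ]

lemma exists_norm_multiDeriv_anisoComp_le_of_notMem_tsupport [DecidableEq ι]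
    {G : Type*} [NormedAddCommGroup G] [NormedSpace ℝ G] (ha₀ : 0 ≤ a₀) (ha : ∀ i, a₀ ≤ a i)
    {q : ℝ} (hq : 0 ≤ q) (N : ι → ℕ) {v : 𝓢(ι → ℝ, G)} (hv : 0 ∉ tsupport v) :
    ∃ c : ℝ≥0, ∀ t ≤ 0, ∀ β ≤ N, ∀ x,
      ‖multiDeriv β (anisoComp a t v) x‖ ≤ c * ((2 ^ (t * a₀)) ^ q * ‖x‖ ^ q) := by
  choose c hc using fun β : ι → ℕ =>
    exists_norm_le_mul_norm_rpow (fun h => hv (tsupport_multiDeriv_subset β v h)) hq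
  refine ⟨∑ β ∈ Finset.Iic N, c β, fun t ht β hβ x => ?_⟩
  have hρ : (2 : ℝ) ^ (t * a₀) ≤ 1 :=
    Real.rpow_le_one_of_one_le_of_nonpos one_le_two (mul_nonpos_of_nonpos_of_nonneg ht ha₀)
  have hle : c β ≤ ∑ β ∈ Finset.Iic N, c β :=
    Finset.single_le_sum (fun _ _ => zero_le) (Finset.mem_Iic.2 hβ)
  calc ‖multiDeriv β (anisoComp a t v) x‖
      ≤ (2 ^ (t * a₀)) ^ (∑ i, β i) * ‖multiDeriv β v (anisoScale a t x)‖ :=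
      norm_multiDeriv_anisoComp_le ha ht β v x
    _ ≤ 1 * (c β * ‖anisoScale a t x‖ ^ q) := by
      gcongr
      · exact pow_le_one₀ (by positivity) hρ
      · exact hc β _
    _ ≤ (∑ β ∈ Finset.Iic N, c β : ℝ≥0) * ((2 ^ (t * a₀)) * ‖x‖) ^ q := by
      rw [one_mul]
      gcongr
      exact norm_anisoScale_le ha ht x
    _ = _ := by rw [Real.mul_rpow (by positivity) (norm_nonneg _)]

lemma exists_lintegral_enorm_mul_enorm_anisoComp_le_of_notMem_tsupport [DecidableEq ι]
    {F G : Type*} [NormedAddCommGroup F] [NormedSpace ℝ F] [NormedAddCommGroup G] [NormedSpace ℝ G]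
    (ha₀ : 0 ≤ a₀) (ha : ∀ i, a₀ ≤ a i) {q : ℝ} (hq : 0 ≤ q) (N : ι → ℕ)
    {v : 𝓢(ι → ℝ, G)} (hv : 0 ∉ tsupport v) :
    ∃ c : ℝ≥0, ∀ (u : 𝓢(ι → ℝ, F)) (B : ℝ≥0∞),
      (∀ α ≤ N, ∫⁻ x, ENNReal.ofReal (‖x‖ ^ q) * ‖multiDeriv α u x‖ₑ ≤ B) →
      ∀ t ≤ 0, ∀ α ≤ N, ∀ β ≤ N,
        ∫⁻ x, ‖multiDeriv α u x‖ₑ * ‖multiDeriv β (anisoComp a t v) x‖ₑ ≤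
          c * B * ENNReal.ofReal ((2 ^ (t * a₀)) ^ q) := by
  obtain ⟨c, hc⟩ := exists_norm_multiDeriv_anisoComp_le_of_notMem_tsupport ha₀ ha hq N hv
  refine ⟨c, fun u B hB t ht α hα β hβ => ?_⟩
  have hpt (x : ι → ℝ) : ‖multiDeriv β (anisoComp a t v) x‖ₑ ≤
      c * ENNReal.ofReal ((2 ^ (t * a₀)) ^ q) * ENNReal.ofReal (‖x‖ ^ q) := by
    rw [← ofReal_norm, ← ENNReal.ofReal_coe_nnreal, mul_assoc,
      ← ENNReal.ofReal_mul (by positivity), ← ENNReal.ofReal_mul c.coe_nonneg]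
    exact ENNReal.ofReal_le_ofReal (hc t ht β hβ x)
  calc
    _ ≤ ∫⁻ x, c * ENNReal.ofReal ((2 ^ (t * a₀)) ^ q) *
        (ENNReal.ofReal (‖x‖ ^ q) * ‖multiDeriv α u x‖ₑ) := by
      refine lintegral_mono fun x => ?_
      rw [mul_comm, ← mul_assoc]
      gcongr
      exact hpt x
    _ ≤ c * ENNReal.ofReal ((2 ^ (t * a₀)) ^ q) * B := by
      rw [lintegral_const_mul' _ _ (by finiteness)]
      gcongr
      exact hB α hα
    _ = _ := by ring

end ProductEstimates

section MultiIndexOperator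

variable {n : ℕ}

lemma coe_lineDerivOpCLM_pow (i : Fin n) (k : ℕ) (u : 𝓢(RV n, ℂ)) :
    ⇑((lineDerivOpCLM ℝ 𝓢(RV n, ℂ) (Pi.single i 1 : RV n) ^ k) u) = pderivIter n i k u := by
  induction k with
  | zero => rfl
  | succ k ih =>
    rw [pow_succ', mul_apply_eq_comp, pderivIter, ← ih]
    rfl

lemma coe_multiDeriv (α : Fin n → ℕ) (u : 𝓢(RV n, ℂ)) :
    ⇑(multiDeriv α u) = (List.finRange n).foldr (fun i h => pderivIter n i (α i) h) u := by
  let D (i : Fin n) := lineDerivOpCLM ℝ 𝓢(RV n, ℂ) (Pi.single i 1 : RV n) ^ α i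
  have hfold (l : List (Fin n)) :
      ⇑((l.map D).prod u) = l.foldr (fun i h => pderivIter n i (α i) h) u := by
    induction l with
    | nil => rfl
    | cons i l ih =>
      rw [List.map_cons, List.prod_cons, mul_apply_eq_comp, coe_lineDerivOpCLM_pow,
        ih, List.foldr_cons]
  have hprod : multiDeriv (F := ℂ) α = ((List.finRange n).map D).prod :=
    Multiset.noncommProd_coe _ <|
      Finset.noncommProd_lemma Finset.univ D (pairwise_commute_lineDerivOpCLM_pow α α)
  rw [hprod, hfold]

lemma Dop_eq_mul_multiDeriv (α : Fin n → ℕ) (u : 𝓢(RV n, ℂ)) (x : RV n) :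
    Dop n α u x = (-I) ^ (∑ i, α i) * multiDeriv α u x := by
  rw [Dop, coe_multiDeriv]

lemma enorm_multiDeriv_schwartzFT (α : Fin n → ℕ) (u : 𝓢(RV n, ℂ)) (ξ : RV n) :
    ‖multiDeriv α (schwartzFT u) ξ‖ₑ = (‖Dop n α (FT n u) ξ‖₊ : ℝ≥0∞) := by
  rw [← coe_schwartzFT, Dop_eq_mul_multiDeriv, ← enorm_eq_nnnorm]
  simp [enorm_eq_nnnorm]

lemma fam_eq_anisoDilate (a : Fin n → ℝ) (φ₀ φ : 𝓢(RV n, ℂ)) (j : ℕ) :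
    fam n a φ₀ φ j = anisoDilate a j (if j = 0 then φ₀ else φ) := by
  ext x
  cases j with
  | zero => simp [fam, anisoDilate_apply, anisoScale_zero]
  | succ j =>
    rw [anisoDilate_apply, Complex.real_smul]
    simp [fam, anisoScale_apply, funext]

end MultiIndexOperator

section FourierNorms

variable {n : ℕ} {a r : Fin n → ℝ} {a₀ : ℝ} {N : Fin n → ℕ}

/-- The quantity `max {‖D^α 𝓕ψ‖_∞ : |α| ≤ m or α ≤ N}`, valued in `[0, ∞]`. -/
def fourierSupNorm (n : ℕ) (N : Fin n → ℕ) (m : ℤ) (ψ : RV n → ℂ) : ℝ≥0∞ :=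
  ⨆ α : {α : Fin n → ℕ // (∑ i, (α i : ℤ)) ≤ m ∨ ∀ l, α l ≤ N l},
    ⨆ ξ : RV n, (‖Dop n α.1 (FT n ψ) ξ‖₊ : ℝ≥0∞)

/-- The quantity `max {‖(1 + |ξ|)^q D^γ 𝓕ψ‖_1 : γ ≤ N}`, valued in `[0, ∞]`, with `|ξ|` the
Euclidean norm. -/
def fourierWeightedNorm (n : ℕ) (N : Fin n → ℕ) (q : ℝ) (ψ : RV n → ℂ) : ℝ≥0∞ :=
  ⨆ γ : {γ : Fin n → ℕ // ∀ l, γ l ≤ N l},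
    ∫⁻ ξ : RV n, ENNReal.ofReal ((1 + Real.sqrt (∑ i, ξ i ^ 2)) ^ q) *
      (‖Dop n γ.1 (FT n ψ) ξ‖₊ : ℝ≥0∞)

lemma fourierSupNorm_mono {m m' : ℤ} (h : m ≤ m') (ψ : RV n → ℂ) :
    fourierSupNorm n N m ψ ≤ fourierSupNorm n N m' ψ :=
  iSup_le fun α => le_iSup (fun α : {α : Fin n → ℕ // (∑ i, (α i : ℤ)) ≤ m' ∨ ∀ l, α l ≤ N l} =>
    ⨆ ξ : RV n, (‖Dop n α.1 (FT n ψ) ξ‖₊ : ℝ≥0∞)) ⟨α.1, α.2.imp_left h.trans'⟩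

lemma enorm_multiDeriv_schwartzFT_le_fourierSupNorm {m : ℤ} {α : Fin n → ℕ}
    (hα : ∑ i, (α i : ℤ) ≤ m ∨ α ≤ N) (ψ : 𝓢(RV n, ℂ)) (ξ : RV n) :
    ‖multiDeriv α (schwartzFT ψ) ξ‖ₑ ≤ fourierSupNorm n N m ψ := by
  rw [enorm_multiDeriv_schwartzFT]
  exact le_iSup_of_le ⟨α, hα⟩ (le_iSup (fun ξ => (‖Dop n α (FT n ψ) ξ‖₊ : ℝ≥0∞)) ξ)

lemma norm_le_sqrt_sum_sq {ι : Type*} [Fintype ι] (x : ι → ℝ) : ‖x‖ ≤ √(∑ i, x i ^ 2) :=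
  (pi_norm_le_iff_of_nonneg (Real.sqrt_nonneg _)).2 fun i =>
    Real.abs_le_sqrt (Finset.single_le_sum (f := fun i => x i ^ 2) (fun _ _ => sq_nonneg _)
      (Finset.mem_univ i))

lemma lintegral_norm_rpow_mul_enorm_multiDeriv_schwartzFT_le {q : ℝ} (hq : 0 ≤ q)
    {γ : Fin n → ℕ} (hγ : γ ≤ N) (ψ : 𝓢(RV n, ℂ)) :
    ∫⁻ ξ, ENNReal.ofReal (‖ξ‖ ^ q) * ‖multiDeriv γ (schwartzFT ψ) ξ‖ₑ ≤
      fourierWeightedNorm n N q ψ := by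
  simp only [enorm_multiDeriv_schwartzFT]
  refine le_iSup_of_le ⟨γ, hγ⟩ (lintegral_mono fun ξ => ?_)
  dsimp only
  gcongr
  linarith [norm_le_sqrt_sum_sq ξ]

lemma MomentCond.multiDeriv_schwartzFT_eq_zero {M : ℤ} {ψ : 𝓢(RV n, ℂ)} (h : MomentCond n M ψ)
    {α : Fin n → ℕ} (hα : ∑ i, (α i : ℤ) ≤ M) : multiDeriv α (schwartzFT ψ) 0 = 0 := by
  have := enorm_multiDeriv_schwartzFT α ψ 0
  rwa [h α hα, nnnorm_zero, ENNReal.coe_zero, enorm_eq_zero] at this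

lemma exists_weightedL1_schwartzConv_le_of_momentCond (ha₀ : 0 ≤ a₀) (ha : ∀ i, a₀ ≤ a i)
    (hN : ∀ l, r l + 1 < N l) {M : ℤ} (hM : -1 ≤ M) (Λ : 𝓢(RV n, ℂ)) :
    ∃ c : ℝ≥0, ∀ Ψ : 𝓢(RV n, ℂ), MomentCond n M Ψ → ∀ j k : ℝ, k ≤ j →
      weightedL1 a r k (schwartzConv (anisoDilate a j Ψ) (anisoDilate a k Λ)) ≤
        c * fourierSupNorm n N (M + 1) Ψ *
          ENNReal.ofReal (2 ^ ((k - j) * (M + 1) * a₀)) := by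
  obtain ⟨m, hm⟩ := Int.eq_ofNat_of_zero_le (by omega : 0 ≤ M + 1)
  obtain ⟨K, hK⟩ := exists_weightedL1_schwartzConv_le a hN
  obtain ⟨c, hc⟩ := exists_lintegral_enorm_anisoComp_mul_enorm_le_of_multiDeriv_zero_eq_zero
    (F := ℂ) ha₀ ha m N (schwartzFT Λ)
  refine ⟨K * c, fun Ψ hΨ j k hkj => ?_⟩
  have hrate : (2 : ℝ) ^ ((k - j) * (M + 1) * a₀) = (2 ^ ((k - j) * a₀)) ^ m := by
    have : (M + 1 : ℝ) = m := mod_cast hm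
    rw [← Real.rpow_mul_natCast two_pos.le, this]
    ring_nf
  rw [hrate, ENNReal.coe_mul, mul_assoc (K : ℝ≥0∞), mul_assoc (K : ℝ≥0∞)]
  refine hK k j k Ψ Λ _ fun α hα β hβ => ?_
  rw [sub_self, anisoComp_zero]
  refine hc (schwartzFT Ψ) _ (fun γ hγ => hΨ.multiDeriv_schwartzFT_eq_zero ?_)
    (fun γ hγ => enorm_multiDeriv_schwartzFT_le_fourierSupNorm (hγ.imp_left fun h => ?_) Ψ)
    (k - j) (sub_nonpos.2 hkj) α hα β hβ
  · rw [← Nat.cast_sum]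
    omega
  · rw [← Nat.cast_sum]
    omega

lemma exists_weightedL1_schwartzConv_le_of_notMem_tsupport (ha₀ : 0 ≤ a₀) (ha : ∀ i, a₀ ≤ a i)
    (hr : ∀ l, 0 ≤ r l) (hN : ∀ l, r l + 1 < N l) {q : ℝ} (hq : 0 ≤ q) {Λ : 𝓢(RV n, ℂ)}
    (hΛ : 0 ∉ tsupport (FT n Λ)) :
    ∃ c : ℝ≥0, ∀ (Ψ : 𝓢(RV n, ℂ)) (j k : ℝ), j ≤ k →
      weightedL1 a r k (schwartzConv (anisoDilate a j Ψ) (anisoDilate a k Λ)) ≤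
        c * fourierWeightedNorm n N q Ψ *
          ENNReal.ofReal (2 ^ (-((k - j) * (q * a₀ - ∑ l, a l * r l)))) := by
  obtain ⟨K, hK⟩ := exists_weightedL1_schwartzConv_le a hN
  rw [← coe_schwartzFT] at hΛ
  obtain ⟨c, hc⟩ := exists_lintegral_enorm_mul_enorm_anisoComp_le_of_notMem_tsupport
    (F := ℂ) ha₀ ha hq N hΛ
  refine ⟨K * c, fun Ψ j k hjk => ?_⟩
  have hunit : weightedL1 a r j (schwartzConv (anisoDilate a j Ψ) (anisoDilate a k Λ)) ≤
      K * (c * fourierWeightedNorm n N q Ψ * ENNReal.ofReal ((2 ^ ((j - k) * a₀)) ^ q)) := by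
    refine hK j j k Ψ Λ _ fun α hα β hβ => ?_
    rw [sub_self, anisoComp_zero]
    exact hc (schwartzFT Ψ) _
      (fun γ hγ => lintegral_norm_rpow_mul_enorm_multiDeriv_schwartzFT_le hq hγ Ψ)
      (j - k) (sub_nonpos.2 hjk) α hα β hβ
  have hrate : (2 : ℝ) ^ (-((k - j) * (q * a₀ - ∑ l, a l * r l))) =
      2 ^ ((k - j) * ∑ l, a l * r l) * (2 ^ ((j - k) * a₀)) ^ q := by
    rw [← Real.rpow_mul two_pos.le, ← Real.rpow_add two_pos]
    ring_nf
  calc _ ≤ ENNReal.ofReal (2 ^ ((k - j) * ∑ l, a l * r l)) *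
        weightedL1 a r j (schwartzConv (anisoDilate a j Ψ) (anisoDilate a k Λ)) :=
      weightedL1_le_ofReal_mul (fun l => ha₀.trans (ha l)) hr hjk _
    _ ≤ _ := mul_le_mul_right hunit _
    _ = _ := by
      rw [hrate, ENNReal.ofReal_mul (by positivity), ENNReal.coe_mul]
      ring

end FourierNorms

section DilatedFamilies

variable {n : ℕ} {a r : Fin n → ℝ} {a₀ : ℝ} {N : Fin n → ℕ}

lemma exists_weightedL1_schwartzConv_le_fourierSupNorm (ha₀ : 0 ≤ a₀) (ha : ∀ i, a₀ ≤ a i)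
    (hN : ∀ l, r l + 1 < N l) {m : ℤ} (hm : 0 ≤ m) (Λ : 𝓢(RV n, ℂ)) :
    ∃ c : ℝ≥0, ∀ (Ψ : 𝓢(RV n, ℂ)) (j : ℝ),
      weightedL1 a r j (schwartzConv (anisoDilate a j Ψ) (anisoDilate a j Λ)) ≤
        c * fourierSupNorm n N m Ψ := by
  obtain ⟨c, hc⟩ :=
    exists_weightedL1_schwartzConv_le_of_momentCond (N := N) ha₀ ha hN le_rfl Λ
  refine ⟨c, fun Ψ j => ?_⟩
  have hvoid : MomentCond n (-1) Ψ := fun α hα => by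
    have : 0 ≤ ∑ i, (α i : ℤ) := by positivity
    omega
  calc _ ≤ c * fourierSupNorm n N (-1 + 1) Ψ := by
        simpa using hc Ψ hvoid j j le_rfl
    _ ≤ _ := by
        gcongr
        exact fourierSupNorm_mono hm Ψ

lemma exists_weightedL1_fam_le_of_le (ha₀ : 0 ≤ a₀) (ha : ∀ i, a₀ ≤ a i)
    (hN : ∀ l, r l + 1 < N l) {M : ℤ} (hM : -1 ≤ M) (Λ₀ Λ : 𝓢(RV n, ℂ)) :
    ∃ c : ℝ≥0, ∀ Ψ₀ Ψ : 𝓢(RV n, ℂ), MomentCond n M Ψ → ∀ j k : ℕ, k ≤ j →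
      weightedL1 a r k (conv2 n (fam n a Ψ₀ Ψ j) (fam n a Λ₀ Λ k)) ≤
        c * (fourierSupNorm n N (M + 1) Ψ + fourierSupNorm n N (M + 1) Ψ₀) *
          ENNReal.ofReal (2 ^ (((k : ℝ) - j) * (M + 1) * a₀)) := by
  obtain ⟨c₀, hc₀⟩ := exists_weightedL1_schwartzConv_le_fourierSupNorm (m := M + 1) (N := N)
    ha₀ ha hN (by omega) Λ₀
  choose c hc using exists_weightedL1_schwartzConv_le_of_momentCond (N := N) ha₀ ha hN hM
  refine ⟨c₀ + (c Λ₀ + c Λ), fun Ψ₀ Ψ hΨ j k hkj => ?_⟩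
  rw [fam_eq_anisoDilate, fam_eq_anisoDilate, ← coe_schwartzConv]
  rcases Nat.eq_zero_or_pos j with rfl | hj
  · obtain rfl : k = 0 := by omega
    refine (hc₀ Ψ₀ _).trans ?_
    simp only [sub_self, zero_mul, Real.rpow_zero, ENNReal.ofReal_one, mul_one]
    exact mul_le_mul' (mod_cast le_self_add) le_add_self
  · rw [if_neg hj.ne']
    refine (hc _ Ψ hΨ j k (mod_cast hkj)).trans ?_
    have hle : c (if k = 0 then Λ₀ else Λ) ≤ c₀ + (c Λ₀ + c Λ) := by
      split_ifs
      · exact le_add_left le_self_add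
      · exact le_add_left le_add_self
    gcongr
    exact le_self_add

lemma exists_weightedL1_fam_le_of_ge (ha₀ : 0 ≤ a₀) (ha : ∀ i, a₀ ≤ a i)
    (hr : ∀ l, 0 ≤ r l) (hN : ∀ l, r l + 1 < N l) {m : ℤ} (hm : 0 ≤ m) {q : ℝ} (hq : 0 ≤ q)
    (Λ₀ : 𝓢(RV n, ℂ)) {Λ : 𝓢(RV n, ℂ)} (hΛ : 0 ∉ tsupport (FT n Λ)) :
    ∃ c : ℝ≥0, ∀ (Ψ₀ Ψ : 𝓢(RV n, ℂ)) (j k : ℕ), j ≤ k →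
      weightedL1 a r k (conv2 n (fam n a Ψ₀ Ψ j) (fam n a Λ₀ Λ k)) ≤
        c * (fourierWeightedNorm n N q Ψ + fourierSupNorm n N m Ψ₀ +
            fourierWeightedNorm n N q Ψ₀) *
          ENNReal.ofReal (2 ^ (-(((k : ℝ) - j) * (q * a₀ - ∑ l, a l * r l)))) := by
  obtain ⟨c₀, hc₀⟩ := exists_weightedL1_schwartzConv_le_fourierSupNorm (N := N) ha₀ ha hN hm Λ₀
  obtain ⟨c, hc⟩ :=
    exists_weightedL1_schwartzConv_le_of_notMem_tsupport (N := N) ha₀ ha hr hN hq hΛ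
  refine ⟨c₀ + c, fun Ψ₀ Ψ j k hjk => ?_⟩
  rw [fam_eq_anisoDilate, fam_eq_anisoDilate, ← coe_schwartzConv]
  rcases Nat.eq_zero_or_pos k with rfl | hk
  · obtain rfl : j = 0 := by omega
    refine (hc₀ Ψ₀ _).trans ?_
    simp only [sub_self, zero_mul, neg_zero, Real.rpow_zero, ENNReal.ofReal_one, mul_one]
    gcongr
    · simp
    · exact le_add_right le_add_self
  · rw [if_neg hk.ne']
    refine (hc _ j k (mod_cast hjk)).trans ?_
    gcongr
    · simp
    · split_ifs
      · exact le_add_self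
      · exact le_add_right le_self_add

end DilatedFamilies

theorem stmt10_general {n : ℕ} {a r : Fin n → ℝ} {a₀ : ℝ} (ha₀ : 0 ≤ a₀) (ha : ∀ i, a₀ ≤ a i)
    (hr : ∀ l, 0 ≤ r l) {N : Fin n → ℕ} (hN : ∀ l, r l + 1 < N l) {Mψ : ℤ} (hMψ : -1 ≤ Mψ)
    {M : ℝ} (hM : -1 ≤ M) (lam0 : 𝓢(RV n, ℂ)) {lam : 𝓢(RV n, ℂ)}
    (hlam : 0 ∉ tsupport (FT n lam)) :
    ∃ c : ℝ, 0 < c ∧ ∀ ψ0 ψ : 𝓢(RV n, ℂ), MomentCond n Mψ ψ → ∀ A B C D : ℝ≥0∞,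
      A = fourierSupNorm n N (Mψ + 1) ψ → B = fourierWeightedNorm n N (M + 1) ψ →
      C = fourierSupNorm n N (Mψ + 1) ψ0 → D = fourierWeightedNorm n N (M + 1) ψ0 →
      ∀ j k : ℕ,
        (k ≤ j → weightedL1 a r k (conv2 n (fam n a ψ0 ψ j) (fam n a lam0 lam k)) ≤
          ENNReal.ofReal c * (A + B + C + D) *
            ENNReal.ofReal (2 ^ (((k : ℝ) - j) * (Mψ + 1) * a₀))) ∧
        (j ≤ k → weightedL1 a r k (conv2 n (fam n a ψ0 ψ j) (fam n a lam0 lam k)) ≤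
          ENNReal.ofReal c * (A + B + C + D) *
            ENNReal.ofReal (2 ^ (-(((k : ℝ) - j) * ((M + 1) * a₀ - ∑ l, a l * r l))))) := by
  obtain ⟨c₁, hc₁⟩ := exists_weightedL1_fam_le_of_le ha₀ ha hN hMψ lam0 lam
  obtain ⟨c₂, hc₂⟩ := exists_weightedL1_fam_le_of_ge (m := Mψ + 1) (q := M + 1) ha₀ ha hr hN
    (by omega) (by linarith) lam0 hlam
  refine ⟨(c₁ + c₂ + 1 : ℝ≥0), by positivity, ?_⟩
  intro ψ0 ψ hψ A B C D hA hB hC hD j k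
  specialize hc₁ ψ0 ψ hψ j k
  specialize hc₂ ψ0 ψ j k
  rw [← hA, ← hC] at hc₁
  rw [← hB, ← hC, ← hD] at hc₂
  have hAC : A + C ≤ A + B + C + D := le_self_add.trans_eq (by ring : A + C + (B + D) = _)
  have hBCD : B + C + D ≤ A + B + C + D := le_self_add.trans_eq (by ring : B + C + D + A = _)
  have hc₁c : c₁ ≤ c₁ + c₂ + 1 := le_self_add.trans le_self_add
  have hc₂c : c₂ ≤ c₁ + c₂ + 1 := le_add_self.trans le_self_add
  rw [ENNReal.ofReal_coe_nnreal]
  exact ⟨fun hkj => (hc₁ hkj).trans (by gcongr), fun hjk => (hc₂ hjk).trans (by gcongr)⟩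

/-- Lemma 3.7 (estimates of the auxiliary integrals `I_{j,k}`). -/
theorem stmt10 (n : ℕ) (hn : 1 ≤ n) (a : Fin n → ℝ) (ha : ∀ i, 1 ≤ a i)
    (anorm : RV n → ℝ) (h : IsAnorm n a anorm)
    (ε : ℝ) (hε : 0 < ε) (Mψ M : ℤ) (hMψ : -1 ≤ Mψ) (hM : -1 ≤ M)
    (r : Fin n → ℝ) (hr : ∀ l, 0 < r l)
    (lam0 lam : SchwartzMap (RV n) ℂ)
    (hl0 : tsupport (FT n ⇑lam0) ⊆ {ξ : RV n | anorm ξ < 2 * ε})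
    (hl : tsupport (FT n ⇑lam) ⊆ {ξ : RV n | ε / 2 < anorm ξ ∧ anorm ξ < 2 * ε}) :
    ∃ c : ℝ, 0 < c ∧
      ∀ ψ0 ψ : SchwartzMap (RV n) ℂ, MomentCond n Mψ (⇑ψ) →
      ∀ A B C D : ℝ≥0∞,
        A = (⨆ α : {α : Fin n → ℕ // (∑ i, (α i : ℤ)) ≤ Mψ + 1 ∨ ∀ l, α l ≤ ⌈r l + 2⌉₊},
              ⨆ ξ : RV n, (‖Dop n α.1 (FT n ⇑ψ) ξ‖₊ : ℝ≥0∞)) →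
        B = (⨆ γ : {γ : Fin n → ℕ // ∀ l, γ l ≤ ⌈r l + 2⌉₊},
              ∫⁻ ξ : RV n,
                ENNReal.ofReal ((1 + Real.sqrt (∑ i, ξ i ^ 2)) ^ ((M:ℝ) + 1)) *
                  (‖Dop n γ.1 (FT n ⇑ψ) ξ‖₊ : ℝ≥0∞)) →
        C = (⨆ α : {α : Fin n → ℕ // (∑ i, (α i : ℤ)) ≤ Mψ + 1 ∨ ∀ l, α l ≤ ⌈r l + 2⌉₊},
              ⨆ ξ : RV n, (‖Dop n α.1 (FT n ⇑ψ0) ξ‖₊ : ℝ≥0∞)) →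
        D = (⨆ γ : {γ : Fin n → ℕ // ∀ l, γ l ≤ ⌈r l + 2⌉₊},
              ∫⁻ ξ : RV n,
                ENNReal.ofReal ((1 + Real.sqrt (∑ i, ξ i ^ 2)) ^ ((M:ℝ) + 1)) *
                  (‖Dop n γ.1 (FT n ⇑ψ0) ξ‖₊ : ℝ≥0∞)) →
        ∀ j k : ℕ,
          (k ≤ j →
            (∫⁻ z : RV n,
                (‖conv2 n (fam n a ⇑ψ0 ⇑ψ j) (fam n a ⇑lam0 ⇑lam k) z‖₊ : ℝ≥0∞) *
                  ∏ l, ENNReal.ofReal ((1 + (2:ℝ) ^ ((k:ℝ) * a l) * |z l|) ^ (r l)))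
              ≤ ENNReal.ofReal c * (A + B + C + D) *
                  ENNReal.ofReal ((2:ℝ) ^ (((k:ℝ) - (j:ℝ)) * ((Mψ:ℝ) + 1) * ⨅ i, a i))) ∧
          (j ≤ k →
            (∫⁻ z : RV n,
                (‖conv2 n (fam n a ⇑ψ0 ⇑ψ j) (fam n a ⇑lam0 ⇑lam k) z‖₊ : ℝ≥0∞) *
                  ∏ l, ENNReal.ofReal ((1 + (2:ℝ) ^ ((k:ℝ) * a l) * |z l|) ^ (r l)))
              ≤ ENNReal.ofReal c * (A + B + C + D) *
                  ENNReal.ofReal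
                    ((2:ℝ) ^ (-(((k:ℝ) - (j:ℝ)) *
                      (((M:ℝ) + 1) * (⨅ i, a i) - ∑ l, a l * r l))))) := by
  have hzero : 0 ∉ tsupport (FT n lam) := fun h0 => by
    have := (hl h0).1
    rw [h.1] at this
    linarith
  have hN (l : Fin n) : r l + 1 < ⌈r l + 2⌉₊ := by linarith [Nat.le_ceil (r l + 2)]
  exact stmt10_general (Real.iInf_nonneg fun i => zero_le_one.trans (ha i))
    (fun i => ciInf_le (Set.finite_range a).bddBelow i) (fun l => (hr l).le) hN hMψ
    (mod_cast hM) lam0 hzero
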